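/- Let (η, ϕ) be a smooth solution of the three-dimensional water-wave system on [0,T]. Then 𝓑(T) = P − (1/2)∫₀ᵀ∭_{Ω(t)} |∇_{x,y}ϕ|² dy dx dt − 3∫₀ᵀ∬_Q η·∂ₜψ dx dt − 2g∫₀ᵀ∬_Q η² dx dt − [∬_Q η·(x·∇ψ) dx]ₜ₌₀^{t=T}, where P := (1/2)∫₀ᵀ [ L₁∫₀^{L₂}∫₋ₕ^{η(t,L₁,x₂)} |∇_{x,y}ϕ(t,L₁,x₂,y)|² dy dx₂ + L₂∫₀^{L₁}∫₋ₕ^{η(t,x₁,L₂)} |∇_{x,y}ϕ(t,x₁,L₂,y)|² dy dx₁ + h∬_Q |∇_{x,y}ϕ(t,x,−h)|² dx ] dt and [F(t)]ₜ₌₀^{t=T} denotes F(T) − F(0). -/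

import Mathlib

open Real Set MeasureTheory

noncomputable section

/-- `∂_{x₁}ϕ(t,x₁,x₂,y)` -/
def phiX1 (ϕ : ℝ → ℝ → ℝ → ℝ → ℝ) (t x₁ x₂ y : ℝ) : ℝ := deriv (fun s => ϕ t s x₂ y) x₁

/-- `∂_{x₂}ϕ(t,x₁,x₂,y)` -/
def phiX2 (ϕ : ℝ → ℝ → ℝ → ℝ → ℝ) (t x₁ x₂ y : ℝ) : ℝ := deriv (fun s => ϕ t x₁ s y) x₂

/-- `∂_yϕ(t,x₁,x₂,y)` -/
def phiY3 (ϕ : ℝ → ℝ → ℝ → ℝ → ℝ) (t x₁ x₂ y : ℝ) : ℝ := deriv (fun s => ϕ t x₁ x₂ s) y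

/-- `∂ₜϕ(t,x₁,x₂,y)` -/
def phiT3 (ϕ : ℝ → ℝ → ℝ → ℝ → ℝ) (t x₁ x₂ y : ℝ) : ℝ := deriv (fun s => ϕ s x₁ x₂ y) t

/-- `|∇_{x,y}ϕ|²(t,x₁,x₂,y)` -/
def gradSq3 (ϕ : ℝ → ℝ → ℝ → ℝ → ℝ) (t x₁ x₂ y : ℝ) : ℝ :=
  (phiX1 ϕ t x₁ x₂ y) ^ 2 + (phiX2 ϕ t x₁ x₂ y) ^ 2 + (phiY3 ϕ t x₁ x₂ y) ^ 2

/-- `|∇ₓϕ|²(t,x₁,x₂,y)` (horizontal gradient) -/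
def gradXSq3 (ϕ : ℝ → ℝ → ℝ → ℝ → ℝ) (t x₁ x₂ y : ℝ) : ℝ :=
  (phiX1 ϕ t x₁ x₂ y) ^ 2 + (phiX2 ϕ t x₁ x₂ y) ^ 2

/-- `∂_{x₁}η(t,x₁,x₂)` -/
def etaX1 (η : ℝ → ℝ → ℝ → ℝ) (t x₁ x₂ : ℝ) : ℝ := deriv (fun s => η t s x₂) x₁

/-- `∂_{x₂}η(t,x₁,x₂)` -/
def etaX2 (η : ℝ → ℝ → ℝ → ℝ) (t x₁ x₂ : ℝ) : ℝ := deriv (fun s => η t x₁ s) x₂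

/-- `∂ₜη(t,x₁,x₂)` -/
def etaT3 (η : ℝ → ℝ → ℝ → ℝ) (t x₁ x₂ : ℝ) : ℝ := deriv (fun s => η s x₁ x₂) t

/-- the trace `ψ(t,x) = ϕ(t,x,η(t,x))` -/
def psi3 (η : ℝ → ℝ → ℝ → ℝ) (ϕ : ℝ → ℝ → ℝ → ℝ → ℝ) (t x₁ x₂ : ℝ) : ℝ :=
  ϕ t x₁ x₂ (η t x₁ x₂)

/-- `∂ₜψ(t,x₁,x₂)` -/
def psi3T (η : ℝ → ℝ → ℝ → ℝ) (ϕ : ℝ → ℝ → ℝ → ℝ → ℝ) (t x₁ x₂ : ℝ) : ℝ :=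
  deriv (fun s => psi3 η ϕ s x₁ x₂) t

/-- `∂_{x₁}ψ(t,x₁,x₂)` -/
def psi3X1 (η : ℝ → ℝ → ℝ → ℝ) (ϕ : ℝ → ℝ → ℝ → ℝ → ℝ) (t x₁ x₂ : ℝ) : ℝ :=
  deriv (fun s => psi3 η ϕ t s x₂) x₁

/-- `∂_{x₂}ψ(t,x₁,x₂)` -/
def psi3X2 (η : ℝ → ℝ → ℝ → ℝ) (ϕ : ℝ → ℝ → ℝ → ℝ → ℝ) (t x₁ x₂ : ℝ) : ℝ :=
  deriv (fun s => psi3 η ϕ t x₁ s) x₂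

/-- `Θ(t,x) = -η ∂ₜψ - (g/2) η²` -/
def Theta3 (g : ℝ) (η : ℝ → ℝ → ℝ → ℝ) (ϕ : ℝ → ℝ → ℝ → ℝ → ℝ) (t x₁ x₂ : ℝ) : ℝ :=
  -(η t x₁ x₂) * psi3T η ϕ t x₁ x₂ - g / 2 * (η t x₁ x₂) ^ 2

/-- the energy `𝓗(t)` -/
def energy3D (L₁ L₂ h g : ℝ) (η : ℝ → ℝ → ℝ → ℝ) (ϕ : ℝ → ℝ → ℝ → ℝ → ℝ) (t : ℝ) : ℝ :=
  g / 2 * (∫ x₁ in (0:ℝ)..L₁, ∫ x₂ in (0:ℝ)..L₂, (η t x₁ x₂) ^ 2)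
    + 1 / 2 * ∫ x₁ in (0:ℝ)..L₁, ∫ x₂ in (0:ℝ)..L₂, ∫ y in (-h)..(η t x₁ x₂),
        gradSq3 ϕ t x₁ x₂ y

/-- the boundary observation `𝓑(T)` -/
def bigB (L₁ L₂ g T : ℝ) (η : ℝ → ℝ → ℝ → ℝ) (ϕ : ℝ → ℝ → ℝ → ℝ → ℝ) : ℝ :=
  ∫ t in (0:ℝ)..T,
    (L₁ * (∫ x₂ in (0:ℝ)..L₂, Theta3 g η ϕ t L₁ x₂)
      + L₂ * ∫ x₁ in (0:ℝ)..L₁, Theta3 g η ϕ t x₁ L₂)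

/-- the positive boundary term `P` -/
def bigP (L₁ L₂ h T : ℝ) (η : ℝ → ℝ → ℝ → ℝ) (ϕ : ℝ → ℝ → ℝ → ℝ → ℝ) : ℝ :=
  1 / 2 * ∫ t in (0:ℝ)..T,
    (L₁ * (∫ x₂ in (0:ℝ)..L₂, ∫ y in (-h)..(η t L₁ x₂), gradSq3 ϕ t L₁ x₂ y)
      + L₂ * (∫ x₁ in (0:ℝ)..L₁, ∫ y in (-h)..(η t x₁ L₂), gradSq3 ϕ t x₁ L₂ y)
      + h * ∫ x₁ in (0:ℝ)..L₁, ∫ x₂ in (0:ℝ)..L₂, gradSq3 ϕ t x₁ x₂ (-h))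

/-- A smooth solution of the three-dimensional water-wave system on `[0,T]`,
in the tank over `Q = [0,L₁] × [0,L₂]`. -/
structure IsWW3D (L₁ L₂ h g T : ℝ) (η : ℝ → ℝ → ℝ → ℝ)
    (ϕ : ℝ → ℝ → ℝ → ℝ → ℝ) : Prop where
  smooth_eta : ContDiff ℝ (⊤ : ℕ∞) (fun p : ℝ × ℝ × ℝ => η p.1 p.2.1 p.2.2)
  smooth_phi : ContDiff ℝ (⊤ : ℕ∞) (fun p : ℝ × ℝ × ℝ × ℝ => ϕ p.1 p.2.1 p.2.2.1 p.2.2.2)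
  eta_lower : ∀ t ∈ Icc (0:ℝ) T, ∀ x₁ ∈ Icc (0:ℝ) L₁, ∀ x₂ ∈ Icc (0:ℝ) L₂,
    -h / 2 ≤ η t x₁ x₂
  eta_mean : ∀ t ∈ Icc (0:ℝ) T,
    (∫ x₁ in (0:ℝ)..L₁, ∫ x₂ in (0:ℝ)..L₂, η t x₁ x₂) = 0
  laplace : ∀ t ∈ Icc (0:ℝ) T, ∀ x₁ ∈ Icc (0:ℝ) L₁, ∀ x₂ ∈ Icc (0:ℝ) L₂,
    ∀ y ∈ Icc (-h) (η t x₁ x₂),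
      deriv (fun s => phiX1 ϕ t s x₂ y) x₁ + deriv (fun s => phiX2 ϕ t x₁ s y) x₂
        + deriv (fun s => phiY3 ϕ t x₁ x₂ s) y = 0
  bc_x1 : ∀ t ∈ Icc (0:ℝ) T, ∀ x₁ ∈ ({0, L₁} : Set ℝ), ∀ x₂ ∈ Icc (0:ℝ) L₂,
    ∀ y ∈ Icc (-h) (η t x₁ x₂), phiX1 ϕ t x₁ x₂ y = 0
  bc_x2 : ∀ t ∈ Icc (0:ℝ) T, ∀ x₂ ∈ ({0, L₂} : Set ℝ), ∀ x₁ ∈ Icc (0:ℝ) L₁,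
    ∀ y ∈ Icc (-h) (η t x₁ x₂), phiX2 ϕ t x₁ x₂ y = 0
  bc_bottom : ∀ t ∈ Icc (0:ℝ) T, ∀ x₁ ∈ Icc (0:ℝ) L₁, ∀ x₂ ∈ Icc (0:ℝ) L₂,
    phiY3 ϕ t x₁ x₂ (-h) = 0
  kinematic : ∀ t ∈ Icc (0:ℝ) T, ∀ x₁ ∈ Icc (0:ℝ) L₁, ∀ x₂ ∈ Icc (0:ℝ) L₂,
    etaT3 η t x₁ x₂
      = phiY3 ϕ t x₁ x₂ (η t x₁ x₂)
        - (etaX1 η t x₁ x₂ * phiX1 ϕ t x₁ x₂ (η t x₁ x₂)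
            + etaX2 η t x₁ x₂ * phiX2 ϕ t x₁ x₂ (η t x₁ x₂))
  bernoulli : ∀ t ∈ Icc (0:ℝ) T, ∀ x₁ ∈ Icc (0:ℝ) L₁, ∀ x₂ ∈ Icc (0:ℝ) L₂,
    phiT3 ϕ t x₁ x₂ (η t x₁ x₂)
      + 1 / 2 * ((phiX1 ϕ t x₁ x₂ (η t x₁ x₂)) ^ 2
          + (phiX2 ϕ t x₁ x₂ (η t x₁ x₂)) ^ 2 + (phiY3 ϕ t x₁ x₂ (η t x₁ x₂)) ^ 2)
      + g * η t x₁ x₂ = 0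
  etaX1_bc : ∀ t ∈ Icc (0:ℝ) T, ∀ x₁ ∈ ({0, L₁} : Set ℝ), ∀ x₂ ∈ Icc (0:ℝ) L₂,
    etaX1 η t x₁ x₂ = 0
  etaX2_bc : ∀ t ∈ Icc (0:ℝ) T, ∀ x₂ ∈ ({0, L₂} : Set ℝ), ∀ x₁ ∈ Icc (0:ℝ) L₁,
    etaX2 η t x₁ x₂ = 0


/-! helper material -/

theorem ww_swap (f : ℝ × ℝ → ℝ) (hf : Continuous f) (a b c d : ℝ) :
    ∫ x in a..b, ∫ y in c..d, f (x, y) = ∫ y in c..d, ∫ x in a..b, f (x, y) := by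
  apply MeasureTheory.intervalIntegral_intervalIntegral_swap
  have h1 : IntegrableOn f (uIcc a b ×ˢ uIcc c d) :=
    hf.continuousOn.integrableOn_compact (isCompact_uIcc.prod isCompact_uIcc)
  exact h1.mono_set (Set.prod_mono uIoc_subset_uIcc uIoc_subset_uIcc)

theorem ww_add2 (F G : ℝ × ℝ → ℝ) (hF : Continuous F) (hG : Continuous G) (a b c d : ℝ) :
    ∫ x in a..b, ∫ y in c..d, (F (x, y) + G (x, y))
      = (∫ x in a..b, ∫ y in c..d, F (x, y)) + ∫ x in a..b, ∫ y in c..d, G (x, y) := by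
  rw [← intervalIntegral.integral_add]
  · congr 1; ext x
    rw [← intervalIntegral.integral_add]
    · exact Continuous.intervalIntegrable (by fun_prop) _ _
    · exact Continuous.intervalIntegrable (by fun_prop) _ _
  · exact Continuous.intervalIntegrable (by fun_prop) _ _
  · exact Continuous.intervalIntegrable (by fun_prop) _ _

theorem ww_mul2 (F : ℝ × ℝ → ℝ) (k : ℝ) (a b c d : ℝ) :
    ∫ x in a..b, ∫ y in c..d, (k * F (x, y))
      = k * ∫ x in a..b, ∫ y in c..d, F (x, y) := by
  simp only [intervalIntegral.integral_const_mul]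

theorem ww_add3 (F G : ℝ × ℝ × ℝ → ℝ) (hF : Continuous F) (hG : Continuous G)
    (a b c d e f : ℝ) :
    ∫ x in a..b, ∫ y in c..d, ∫ z in e..f, (F (x, y, z) + G (x, y, z))
      = (∫ x in a..b, ∫ y in c..d, ∫ z in e..f, F (x, y, z))
        + ∫ x in a..b, ∫ y in c..d, ∫ z in e..f, G (x, y, z) := by
  rw [← intervalIntegral.integral_add]
  · congr 1; ext x
    exact ww_add2 (fun q => F (x, q)) (fun q => G (x, q)) (by fun_prop) (by fun_prop) _ _ _ _
  · exact Continuous.intervalIntegrable (by fun_prop) _ _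
  · exact Continuous.intervalIntegrable (by fun_prop) _ _

theorem ww_ftc (f f' : ℝ → ℝ) (hf : ∀ x, HasDerivAt f (f' x) x) (hc : Continuous f') (a b : ℝ) :
    ∫ x in a..b, f' x = f b - f a :=
  intervalIntegral.integral_eq_sub_of_hasDerivAt (fun x _ => hf x) (hc.intervalIntegrable _ _)

/-- integrate out the first variable -/
theorem ww_box1 (W W' : ℝ × ℝ × ℝ → ℝ) (hc : Continuous W')
    (hd : ∀ a b c, HasDerivAt (fun s => W (s, b, c)) (W' (a, b, c)) a) (A B C D E F : ℝ) :
    ∫ x in A..B, ∫ y in C..D, ∫ z in E..F, W' (x, y, z)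
      = ∫ y in C..D, ∫ z in E..F, (W (B, y, z) - W (A, y, z)) := by
  rw [ww_swap (fun q => ∫ z in E..F, W' (q.1, q.2, z)) (by fun_prop)]
  congr 1; ext y
  rw [ww_swap (fun q => W' (q.1, y, q.2)) (by fun_prop)]
  congr 1; ext z
  exact ww_ftc (fun s => W (s, y, z)) (fun s => W' (s, y, z)) (fun x => hd x y z) (by fun_prop) _ _

theorem ww_box2 (W W' : ℝ × ℝ × ℝ → ℝ) (hc : Continuous W')
    (hd : ∀ a b c, HasDerivAt (fun s => W (a, s, c)) (W' (a, b, c)) b) (A B C D E F : ℝ) :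
    ∫ x in A..B, ∫ y in C..D, ∫ z in E..F, W' (x, y, z)
      = ∫ x in A..B, ∫ z in E..F, (W (x, D, z) - W (x, C, z)) := by
  congr 1; ext x
  rw [ww_swap (fun q => W' (x, q.1, q.2)) (by fun_prop)]
  congr 1; ext z
  exact ww_ftc (fun s => W (x, s, z)) (fun s => W' (x, s, z)) (fun y => hd x y z) (by fun_prop) _ _

theorem ww_box3 (W W' : ℝ × ℝ × ℝ → ℝ) (hc : Continuous W')
    (hd : ∀ a b c, HasDerivAt (fun s => W (a, b, s)) (W' (a, b, c)) c) (A B C D E F : ℝ) :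
    ∫ x in A..B, ∫ y in C..D, ∫ z in E..F, W' (x, y, z)
      = ∫ x in A..B, ∫ y in C..D, (W (x, y, F) - W (x, y, E)) := by
  congr 1; ext x
  congr 1; ext y
  exact ww_ftc (fun s => W (x, y, s)) (fun s => W' (x, y, s)) (fun z => hd x y z) (by fun_prop) _ _

/-- directional derivative -/
def wwD {E : Type*} [NormedAddCommGroup E] [NormedSpace ℝ E] (v : E) (F : E → ℝ) (p : E) : ℝ :=
  fderiv ℝ F p v

section
variable {E : Type*} [NormedAddCommGroup E] [NormedSpace ℝ E]

theorem wwD_smooth {F : E → ℝ} (hF : ContDiff ℝ (⊤ : ℕ∞) F) (v : E) :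
    ContDiff ℝ (⊤ : ℕ∞) (wwD v F) := by
  have := hF.fderiv_right (m := (⊤ : ℕ∞)) (by simp)
  exact this.clm_apply contDiff_const

theorem wwD_comm {F : E → ℝ} (hF : ContDiff ℝ (⊤ : ℕ∞) F) (v w : E) (p : E) :
    wwD v (wwD w F) p = wwD w (wwD v F) p := by
  have hs : IsSymmSndFDerivAt ℝ F p := by
    apply hF.contDiffAt.isSymmSndFDerivAt
    simp only [minSmoothness_of_isRCLikeNormedField]
    exact WithTop.coe_le_coe.mpr (le_top : (2 : ℕ∞) ≤ ⊤)
  have hd : DifferentiableAt ℝ (fderiv ℝ F) p :=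
    ((hF.fderiv_right (m := (⊤ : ℕ∞)) (by simp)).differentiable (by simp)).differentiableAt
  have key : ∀ a b : E, wwD a (wwD b F) p = fderiv ℝ (fderiv ℝ F) p a b := by
    intro a b
    unfold wwD
    rw [fderiv_clm_apply hd (by fun_prop)]
    simp
  rw [key, key]; exact hs v w

theorem ww_smooth_diff {F : E → ℝ} (hF : ContDiff ℝ (⊤ : ℕ∞) F) : Differentiable ℝ F :=
  hF.differentiable (by simp)

/-- chain rule along a curve -/
theorem ww_chain {F : E → ℝ} (hF : Differentiable ℝ F) {c : ℝ → E} {c' : E} {s : ℝ}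
    (hc : HasDerivAt c c' s) : HasDerivAt (fun r => F (c r)) (wwD c' F (c s)) s :=
  (hF (c s)).hasFDerivAt.comp_hasDerivAt s hc

theorem wwD_add (u v : E) (F : E → ℝ) (p : E) : wwD (u + v) F p = wwD u F p + wwD v F p := by
  simp [wwD]
theorem wwD_smul (k : ℝ) (v : E) (F : E → ℝ) (p : E) : wwD (k • v) F p = k * wwD v F p := by
  simp [wwD]
end

theorem wwD_31 {F : ℝ × ℝ × ℝ → ℝ} (hF : Differentiable ℝ F) (a b c : ℝ) :
    HasDerivAt (fun s => F (s, b, c)) (wwD (1, 0, 0) F (a, b, c)) a :=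
  ww_chain hF (c := fun s => (s, b, c))
    ((hasDerivAt_id a).prodMk ((hasDerivAt_const a b).prodMk (hasDerivAt_const a c)))
theorem wwD_32 {F : ℝ × ℝ × ℝ → ℝ} (hF : Differentiable ℝ F) (a b c : ℝ) :
    HasDerivAt (fun s => F (a, s, c)) (wwD (0, 1, 0) F (a, b, c)) b :=
  ww_chain hF (c := fun s => (a, s, c))
    ((hasDerivAt_const b a).prodMk ((hasDerivAt_id b).prodMk (hasDerivAt_const b c)))
theorem wwD_33 {F : ℝ × ℝ × ℝ → ℝ} (hF : Differentiable ℝ F) (a b c : ℝ) :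
    HasDerivAt (fun s => F (a, b, s)) (wwD (0, 0, 1) F (a, b, c)) c :=
  ww_chain hF (c := fun s => (a, b, s))
    ((hasDerivAt_const c a).prodMk ((hasDerivAt_const c b).prodMk (hasDerivAt_id c)))
theorem wwD_21 {F : ℝ × ℝ → ℝ} (hF : Differentiable ℝ F) (a b : ℝ) :
    HasDerivAt (fun s => F (s, b)) (wwD (1, 0) F (a, b)) a :=
  ww_chain hF (c := fun s => (s, b)) ((hasDerivAt_id a).prodMk (hasDerivAt_const a b))
theorem wwD_22 {F : ℝ × ℝ → ℝ} (hF : Differentiable ℝ F) (a b : ℝ) :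
    HasDerivAt (fun s => F (a, s)) (wwD (0, 1) F (a, b)) b :=
  ww_chain hF (c := fun s => (a, s)) ((hasDerivAt_const b a).prodMk (hasDerivAt_id b))

/-- pull-back to the fixed strip -/
theorem ww_strip (f : ℝ → ℝ) (h e : ℝ) :
    ∫ s in (0:ℝ)..1, (e + h) * f (-h + (e + h) * s) = ∫ y in (-h)..e, f y := by
  rw [intervalIntegral.integral_const_mul]
  have := intervalIntegral.smul_integral_comp_add_mul (a := 0) (b := 1) f (e + h) (-h)
  rw [smul_eq_mul] at this
  rw [this]; congr 1 <;> ring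

/-- divergence theorem below a graph -/
theorem ww_div (L₁ L₂ h : ℝ) (e : ℝ × ℝ → ℝ) (V₁ V₂ V₃ : ℝ × ℝ × ℝ → ℝ)
    (he : ContDiff ℝ (⊤ : ℕ∞) e) (h1 : ContDiff ℝ (⊤ : ℕ∞) V₁)
    (h2 : ContDiff ℝ (⊤ : ℕ∞) V₂) (h3 : ContDiff ℝ (⊤ : ℕ∞) V₃) :
    ∫ a in (0:ℝ)..L₁, ∫ b in (0:ℝ)..L₂, ∫ y in (-h)..(e (a, b)),
      (wwD (1,0,0) V₁ (a,b,y) + wwD (0,1,0) V₂ (a,b,y) + wwD (0,0,1) V₃ (a,b,y))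
    = ((∫ b in (0:ℝ)..L₂, ∫ y in (-h)..(e (L₁, b)), V₁ (L₁, b, y))
        - ∫ b in (0:ℝ)..L₂, ∫ y in (-h)..(e (0, b)), V₁ (0, b, y))
      + ((∫ a in (0:ℝ)..L₁, ∫ y in (-h)..(e (a, L₂)), V₂ (a, L₂, y))
        - ∫ a in (0:ℝ)..L₁, ∫ y in (-h)..(e (a, 0)), V₂ (a, 0, y))
      + ((∫ a in (0:ℝ)..L₁, ∫ b in (0:ℝ)..L₂,
          (V₃ (a, b, e (a, b)) - (wwD (1,0) e (a,b) * V₁ (a, b, e (a, b))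
            + wwD (0,1) e (a,b) * V₂ (a, b, e (a, b)))))
        - ∫ a in (0:ℝ)..L₁, ∫ b in (0:ℝ)..L₂, V₃ (a, b, -h)) := by
  have ce : Continuous e := he.continuous
  have ce1 : Continuous (wwD (1,0) e) := (wwD_smooth he _).continuous
  have ce2 : Continuous (wwD (0,1) e) := (wwD_smooth he _).continuous
  have c1 := h1.continuous
  have c2 := h2.continuous
  have c3 := h3.continuous
  have c11 : Continuous (wwD (1,0,0) V₁) := (wwD_smooth h1 _).continuous
  have c13 : Continuous (wwD (0,0,1) V₁) := (wwD_smooth h1 _).continuous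
  have c22 : Continuous (wwD (0,1,0) V₂) := (wwD_smooth h2 _).continuous
  have c23 : Continuous (wwD (0,0,1) V₂) := (wwD_smooth h2 _).continuous
  have c33 : Continuous (wwD (0,0,1) V₃) := (wwD_smooth h3 _).continuous
  have d1 := ww_smooth_diff h1
  have d2 := ww_smooth_diff h2
  have d3 := ww_smooth_diff h3
  have de := ww_smooth_diff he
  let J : ℝ × ℝ × ℝ → ℝ := fun p => e (p.1, p.2.1) + h
  let S : ℝ × ℝ × ℝ → ℝ × ℝ × ℝ := fun p => (p.1, p.2.1, -h + J p * p.2.2)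
  let E1 : ℝ × ℝ × ℝ → ℝ := fun p => wwD (1,0) e (p.1, p.2.1)
  let E2 : ℝ × ℝ × ℝ → ℝ := fun p => wwD (0,1) e (p.1, p.2.1)
  have cJ : Continuous J := by fun_prop
  have cS : Continuous S := by fun_prop
  have cE1 : Continuous E1 := by fun_prop
  have cE2 : Continuous E2 := by fun_prop
  let W1 : ℝ × ℝ × ℝ → ℝ := fun p => J p * V₁ (S p)
  let W2 : ℝ × ℝ × ℝ → ℝ := fun p => J p * V₂ (S p)
  let W3 : ℝ × ℝ × ℝ → ℝ := fun p =>
    V₃ (S p) - p.2.2 * (E1 p * V₁ (S p) + E2 p * V₂ (S p))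
  let W1' : ℝ × ℝ × ℝ → ℝ := fun p => E1 p * V₁ (S p) +
    J p * (wwD (1,0,0) V₁ (S p) + E1 p * p.2.2 * wwD (0,0,1) V₁ (S p))
  let W2' : ℝ × ℝ × ℝ → ℝ := fun p => E2 p * V₂ (S p) +
    J p * (wwD (0,1,0) V₂ (S p) + E2 p * p.2.2 * wwD (0,0,1) V₂ (S p))
  let W3' : ℝ × ℝ × ℝ → ℝ := fun p => J p * wwD (0,0,1) V₃ (S p)
    - ((E1 p * V₁ (S p) + E2 p * V₂ (S p))
      + p.2.2 * (E1 p * (J p * wwD (0,0,1) V₁ (S p)) + E2 p * (J p * wwD (0,0,1) V₂ (S p))))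
  have cW1 : Continuous W1 := by fun_prop
  have cW2 : Continuous W2 := by fun_prop
  have cW3 : Continuous W3 := by fun_prop
  have cW1' : Continuous W1' := by fun_prop
  have cW2' : Continuous W2' := by fun_prop
  have cW3' : Continuous W3' := by fun_prop
  have hJ1 : ∀ a b c, HasDerivAt (fun s => J (s, b, c)) (E1 (a, b, c)) a := fun a b c =>
    (wwD_21 de a b).add_const h
  have hJ2 : ∀ a b c, HasDerivAt (fun s => J (a, s, c)) (E2 (a, b, c)) b := fun a b c =>
    (wwD_22 de a b).add_const h
  have hS1 : ∀ (V : ℝ × ℝ × ℝ → ℝ), Differentiable ℝ V → ∀ a b c,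
      HasDerivAt (fun s => V (S (s, b, c))) (wwD (1,0,0) V (S (a,b,c))
        + E1 (a,b,c) * c * wwD (0,0,1) V (S (a,b,c))) a := by
    intro V hV a b c
    have := ww_chain hV (c := fun s => S (s, b, c))
      ((hasDerivAt_id a).prodMk ((hasDerivAt_const a b).prodMk
        (((hJ1 a b c).mul_const c).const_add (-h))))
    convert this using 1
    rw [← wwD_smul, ← wwD_add]; simp
  have hS2 : ∀ (V : ℝ × ℝ × ℝ → ℝ), Differentiable ℝ V → ∀ a b c,
      HasDerivAt (fun s => V (S (a, s, c))) (wwD (0,1,0) V (S (a,b,c))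
        + E2 (a,b,c) * c * wwD (0,0,1) V (S (a,b,c))) b := by
    intro V hV a b c
    have := ww_chain hV (c := fun s => S (a, s, c))
      ((hasDerivAt_const b a).prodMk ((hasDerivAt_id b).prodMk
        (((hJ2 a b c).mul_const c).const_add (-h))))
    convert this using 1
    rw [← wwD_smul, ← wwD_add]; simp
  have hS3 : ∀ (V : ℝ × ℝ × ℝ → ℝ), Differentiable ℝ V → ∀ a b c,
      HasDerivAt (fun s => V (S (a, b, s))) (J (a,b,c) * wwD (0,0,1) V (S (a,b,c))) c := by
    intro V hV a b c
    have := ww_chain hV (c := fun s => S (a, b, s))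
      ((hasDerivAt_const c a).prodMk ((hasDerivAt_const c b).prodMk
        (((hasDerivAt_id c).const_mul (J (a,b,c))).const_add (-h))))
    convert this using 1
    rw [← wwD_smul]; simp
  have B1 := ww_box1 W1 W1' cW1' (fun a b c => (hJ1 a b c).mul (hS1 V₁ d1 a b c)) 0 L₁ 0 L₂ 0 1
  have B2 := ww_box2 W2 W2' cW2' (fun a b c => (hJ2 a b c).mul (hS2 V₂ d2 a b c)) 0 L₁ 0 L₂ 0 1
  have B3 := ww_box3 W3 W3' cW3' (fun a b c => by
    have := (hS3 V₃ d3 a b c).sub ((hasDerivAt_id c).mul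
      (((hS3 V₁ d1 a b c).const_mul (E1 (a,b,c))).add ((hS3 V₂ d2 a b c).const_mul (E2 (a,b,c)))))
    exact this.congr_deriv (by simp [W3'])) 0 L₁ 0 L₂ 0 1
  have lhs : ∫ a in (0:ℝ)..L₁, ∫ b in (0:ℝ)..L₂, ∫ y in (-h)..(e (a, b)),
      (wwD (1,0,0) V₁ (a,b,y) + wwD (0,1,0) V₂ (a,b,y) + wwD (0,0,1) V₃ (a,b,y))
      = ∫ a in (0:ℝ)..L₁, ∫ b in (0:ℝ)..L₂, ∫ s in (0:ℝ)..1,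
        ((W1' (a,b,s) + W2' (a,b,s)) + W3' (a,b,s)) := by
    congr 1; ext a; congr 1; ext b
    rw [← ww_strip]
    congr 1; ext s
    simp only [W1', W2', W3', S, J]
    ring
  rw [lhs, ww_add3 (fun p => W1' p + W2' p) W3' (by fun_prop) cW3',
    ww_add3 W1' W2' cW1' cW2', B1, B2, B3]
  have sub2 : ∀ (F G : ℝ × ℝ → ℝ), Continuous F → Continuous G → ∀ a b c d : ℝ,
      ∫ x in a..b, ∫ y in c..d, (F (x, y) - G (x, y))
      = (∫ x in a..b, ∫ y in c..d, F (x, y)) - ∫ x in a..b, ∫ y in c..d, G (x, y) := by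
    intro F G hF hG a b c d
    have := ww_add2 F (fun q => (-1) * G q) hF (by fun_prop) a b c d
    rw [ww_mul2] at this
    simp only [neg_one_mul, ← sub_eq_add_neg] at this
    exact this
  rw [sub2 (fun q => W1 (L₁, q.1, q.2)) (fun q => W1 (0, q.1, q.2)) (by fun_prop) (by fun_prop),
    sub2 (fun q => W2 (q.1, L₂, q.2)) (fun q => W2 (q.1, 0, q.2)) (by fun_prop) (by fun_prop),
    sub2 (fun q => W3 (q.1, q.2, 1)) (fun q => W3 (q.1, q.2, 0)) (by fun_prop) (by fun_prop)]
  simp only [W1, W2, W3, S, J, E1, E2]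
  congr 1
  · congr 1
    · congr 1 <;> (congr 1; ext b; exact ww_strip (fun y => V₁ (_, b, y)) h _)
    · congr 1 <;> (congr 1; ext a; exact ww_strip (fun y => V₂ (a, _, y)) h _)
  · congr 1 <;> (congr 1; ext a; congr 1; ext b; simp)

theorem ww_congr {a b : ℝ} (hab : a ≤ b) {f g : ℝ → ℝ} (hfg : ∀ x ∈ Icc a b, f x = g x) :
    ∫ x in a..b, f x = ∫ x in a..b, g x :=
  intervalIntegral.integral_congr (fun x hx => hfg x (by rwa [uIcc_of_le hab] at hx))

/-- Rellich-Pohozaev identity below a graph -/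
theorem ww_poho (L₁ L₂ h : ℝ) (hL₁ : 0 < L₁) (hL₂ : 0 < L₂) (e : ℝ × ℝ → ℝ) (f : ℝ × ℝ × ℝ → ℝ)
    (he : ContDiff ℝ (⊤ : ℕ∞) e) (hf : ContDiff ℝ (⊤ : ℕ∞) f)
    (hlow : ∀ a ∈ Icc (0:ℝ) L₁, ∀ b ∈ Icc (0:ℝ) L₂, -h ≤ e (a, b))
    (f1 f2 f3 G : ℝ × ℝ × ℝ → ℝ)
    (ef1 : f1 = wwD (1,0,0) f) (ef2 : f2 = wwD (0,1,0) f) (ef3 : f3 = wwD (0,0,1) f)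
    (eG : ∀ p, G p = f1 p ^ 2 + f2 p ^ 2 + f3 p ^ 2)
    (lap : ∀ a ∈ Icc (0:ℝ) L₁, ∀ b ∈ Icc (0:ℝ) L₂, ∀ y ∈ Icc (-h) (e (a, b)),
      wwD (1,0,0) f1 (a,b,y) + wwD (0,1,0) f2 (a,b,y) + wwD (0,0,1) f3 (a,b,y) = 0)
    (bc1 : ∀ a ∈ ({0, L₁} : Set ℝ), ∀ b ∈ Icc (0:ℝ) L₂, ∀ y ∈ Icc (-h) (e (a, b)),
      f1 (a,b,y) = 0)
    (bc2 : ∀ b ∈ ({0, L₂} : Set ℝ), ∀ a ∈ Icc (0:ℝ) L₁, ∀ y ∈ Icc (-h) (e (a, b)),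
      f2 (a,b,y) = 0)
    (bc3 : ∀ a ∈ Icc (0:ℝ) L₁, ∀ b ∈ Icc (0:ℝ) L₂, f3 (a,b,-h) = 0) :
    ∫ a in (0:ℝ)..L₁, ∫ b in (0:ℝ)..L₂,
      ((f3 (a,b,e (a,b)) - (wwD (1,0) e (a,b) * f1 (a,b,e (a,b))
          + wwD (0,1) e (a,b) * f2 (a,b,e (a,b))))
        * (a * f1 (a,b,e (a,b)) + b * f2 (a,b,e (a,b)) + e (a,b) * f3 (a,b,e (a,b)))
        - 1 / 2 * G (a,b,e (a,b)) * (e (a,b) - (a * wwD (1,0) e (a,b) + b * wwD (0,1) e (a,b))))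
    = 1 / 2 * (L₁ * (∫ b in (0:ℝ)..L₂, ∫ y in (-h)..(e (L₁, b)), G (L₁, b, y))
        + L₂ * (∫ a in (0:ℝ)..L₁, ∫ y in (-h)..(e (a, L₂)), G (a, L₂, y))
        + h * ∫ a in (0:ℝ)..L₁, ∫ b in (0:ℝ)..L₂, G (a, b, -h))
      - 1 / 2 * ∫ a in (0:ℝ)..L₁, ∫ b in (0:ℝ)..L₂, ∫ y in (-h)..(e (a, b)), G (a,b,y) := by
  have s1 : ContDiff ℝ (⊤ : ℕ∞) f1 := by rw [ef1]; exact wwD_smooth hf _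
  have s2 : ContDiff ℝ (⊤ : ℕ∞) f2 := by rw [ef2]; exact wwD_smooth hf _
  have s3 : ContDiff ℝ (⊤ : ℕ∞) f3 := by rw [ef3]; exact wwD_smooth hf _
  have k12 : ∀ p, wwD (1,0,0) f2 p = wwD (0,1,0) f1 p := by
    intro p; rw [ef1, ef2]; exact wwD_comm hf _ _ _
  have k13 : ∀ p, wwD (1,0,0) f3 p = wwD (0,0,1) f1 p := by
    intro p; rw [ef1, ef3]; exact wwD_comm hf _ _ _
  have k23 : ∀ p, wwD (0,1,0) f3 p = wwD (0,0,1) f2 p := by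
    intro p; rw [ef2, ef3]; exact wwD_comm hf _ _ _
  have d1 := ww_smooth_diff s1
  have d2 := ww_smooth_diff s2
  have d3 := ww_smooth_diff s3
  let R : ℝ × ℝ × ℝ → ℝ := fun p => p.1 * f1 p + p.2.1 * f2 p + p.2.2 * f3 p
  let V1 : ℝ × ℝ × ℝ → ℝ := fun p =>
    R p * f1 p - 1 / 2 * ((f1 p ^ 2 + f2 p ^ 2 + f3 p ^ 2) * p.1)
  let V2 : ℝ × ℝ × ℝ → ℝ := fun p =>
    R p * f2 p - 1 / 2 * ((f1 p ^ 2 + f2 p ^ 2 + f3 p ^ 2) * p.2.1)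
  let V3 : ℝ × ℝ × ℝ → ℝ := fun p =>
    R p * f3 p - 1 / 2 * ((f1 p ^ 2 + f2 p ^ 2 + f3 p ^ 2) * p.2.2)
  have sR : ContDiff ℝ (⊤ : ℕ∞) R := by fun_prop
  have sV1 : ContDiff ℝ (⊤ : ℕ∞) V1 := by fun_prop
  have sV2 : ContDiff ℝ (⊤ : ℕ∞) V2 := by fun_prop
  have sV3 : ContDiff ℝ (⊤ : ℕ∞) V3 := by fun_prop
  have w1 : ∀ a b y, wwD (1,0,0) V1 (a,b,y) =
      (f1 (a,b,y) + a * wwD (1,0,0) f1 (a,b,y) + b * wwD (1,0,0) f2 (a,b,y)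
        + y * wwD (1,0,0) f3 (a,b,y)) * f1 (a,b,y) + R (a,b,y) * wwD (1,0,0) f1 (a,b,y)
      - 1 / 2 * ((2 * f1 (a,b,y) * wwD (1,0,0) f1 (a,b,y) + 2 * f2 (a,b,y) * wwD (1,0,0) f2 (a,b,y)
        + 2 * f3 (a,b,y) * wwD (1,0,0) f3 (a,b,y)) * a
        + (f1 (a,b,y) ^ 2 + f2 (a,b,y) ^ 2 + f3 (a,b,y) ^ 2)) := by
    intro a b y
    refine (wwD_31 (ww_smooth_diff sV1) a b y).unique ?_
    have g1 := wwD_31 d1 a b y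
    have g2 := wwD_31 d2 a b y
    have g3 := wwD_31 d3 a b y
    have := ((((hasDerivAt_id a).mul g1).add (g2.const_mul b)).add (g3.const_mul y)).mul g1
    have := this.sub (((((g1.pow 2).add (g2.pow 2)).add (g3.pow 2)).mul (hasDerivAt_id a)).const_mul
      (1 / 2 : ℝ))
    refine this.congr_deriv ?_
    simp [R]
  have w2 : ∀ a b y, wwD (0,1,0) V2 (a,b,y) =
      (f2 (a,b,y) + a * wwD (0,1,0) f1 (a,b,y) + b * wwD (0,1,0) f2 (a,b,y)
        + y * wwD (0,1,0) f3 (a,b,y)) * f2 (a,b,y) + R (a,b,y) * wwD (0,1,0) f2 (a,b,y)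
      - 1 / 2 * ((2 * f1 (a,b,y) * wwD (0,1,0) f1 (a,b,y) + 2 * f2 (a,b,y) * wwD (0,1,0) f2 (a,b,y)
        + 2 * f3 (a,b,y) * wwD (0,1,0) f3 (a,b,y)) * b
        + (f1 (a,b,y) ^ 2 + f2 (a,b,y) ^ 2 + f3 (a,b,y) ^ 2)) := by
    intro a b y
    refine (wwD_32 (ww_smooth_diff sV2) a b y).unique ?_
    have g1 := wwD_32 d1 a b y
    have g2 := wwD_32 d2 a b y
    have g3 := wwD_32 d3 a b y
    have := (((g1.const_mul a).add ((hasDerivAt_id b).mul g2)).add (g3.const_mul y)).mul g2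
    have := this.sub (((((g1.pow 2).add (g2.pow 2)).add (g3.pow 2)).mul (hasDerivAt_id b)).const_mul
      (1 / 2 : ℝ))
    refine this.congr_deriv ?_
    simp [R]; left; ring
  have w3 : ∀ a b y, wwD (0,0,1) V3 (a,b,y) =
      (f3 (a,b,y) + a * wwD (0,0,1) f1 (a,b,y) + b * wwD (0,0,1) f2 (a,b,y)
        + y * wwD (0,0,1) f3 (a,b,y)) * f3 (a,b,y) + R (a,b,y) * wwD (0,0,1) f3 (a,b,y)
      - 1 / 2 * ((2 * f1 (a,b,y) * wwD (0,0,1) f1 (a,b,y) + 2 * f2 (a,b,y) * wwD (0,0,1) f2 (a,b,y)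
        + 2 * f3 (a,b,y) * wwD (0,0,1) f3 (a,b,y)) * y
        + (f1 (a,b,y) ^ 2 + f2 (a,b,y) ^ 2 + f3 (a,b,y) ^ 2)) := by
    intro a b y
    refine (wwD_33 (ww_smooth_diff sV3) a b y).unique ?_
    have g1 := wwD_33 d1 a b y
    have g2 := wwD_33 d2 a b y
    have g3 := wwD_33 d3 a b y
    have := (((g1.const_mul a).add (g2.const_mul b)).add ((hasDerivAt_id y).mul g3)).mul g3
    have := this.sub (((((g1.pow 2).add (g2.pow 2)).add (g3.pow 2)).mul (hasDerivAt_id y)).const_mul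
      (1 / 2 : ℝ))
    refine this.congr_deriv ?_
    simp [R]; left; ring
  have main := ww_div L₁ L₂ h e V1 V2 V3 he sV1 sV2 sV3
  have z1 : (0:ℝ) ∈ Icc (0:ℝ) L₁ := ⟨le_refl _, hL₁.le⟩
  have z2 : (0:ℝ) ∈ Icc (0:ℝ) L₂ := ⟨le_refl _, hL₂.le⟩
  have l1 : L₁ ∈ Icc (0:ℝ) L₁ := ⟨hL₁.le, le_refl _⟩
  have l2 : L₂ ∈ Icc (0:ℝ) L₂ := ⟨hL₂.le, le_refl _⟩
  have t0 : ∫ a in (0:ℝ)..L₁, ∫ b in (0:ℝ)..L₂, ∫ y in (-h)..(e (a, b)),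
      (wwD (1,0,0) V1 (a,b,y) + wwD (0,1,0) V2 (a,b,y) + wwD (0,0,1) V3 (a,b,y))
      = -(1 / 2) * ∫ a in (0:ℝ)..L₁, ∫ b in (0:ℝ)..L₂, ∫ y in (-h)..(e (a, b)), G (a,b,y) := by
    simp only [← intervalIntegral.integral_const_mul]
    refine ww_congr hL₁.le fun a ha => ww_congr hL₂.le fun b hb =>
      ww_congr (hlow a ha b hb) fun y hy => ?_
    rw [w1, w2, w3, eG, k12, k13, k23]
    have := lap a ha b hb y hy
    simp only [R]
    linear_combination (a * f1 (a,b,y) + b * f2 (a,b,y) + y * f3 (a,b,y)) * this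
  have t1 : ∫ b in (0:ℝ)..L₂, ∫ y in (-h)..(e (L₁, b)), V1 (L₁, b, y)
      = -(1 / 2) * L₁ * ∫ b in (0:ℝ)..L₂, ∫ y in (-h)..(e (L₁, b)), G (L₁, b, y) := by
    simp only [← intervalIntegral.integral_const_mul]
    refine ww_congr hL₂.le fun b hb => ww_congr (hlow _ l1 b hb) fun y hy => ?_
    simp only [V1, eG, bc1 L₁ (by simp) b hb y hy]
    ring
  have t2 : ∫ b in (0:ℝ)..L₂, ∫ y in (-h)..(e (0, b)), V1 (0, b, y) = 0 := by
    rw [ww_congr hL₂.le (g := fun _ => 0)]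
    · simp
    intro b hb
    rw [ww_congr (hlow _ z1 b hb) (g := fun _ => 0)]
    · simp
    intro y hy
    simp only [V1, bc1 0 (by simp) b hb y hy]
    ring
  have t3 : ∫ a in (0:ℝ)..L₁, ∫ y in (-h)..(e (a, L₂)), V2 (a, L₂, y)
      = -(1 / 2) * L₂ * ∫ a in (0:ℝ)..L₁, ∫ y in (-h)..(e (a, L₂)), G (a, L₂, y) := by
    simp only [← intervalIntegral.integral_const_mul]
    refine ww_congr hL₁.le fun a ha => ww_congr (hlow a ha _ l2) fun y hy => ?_
    simp only [V2, eG, bc2 L₂ (by simp) a ha y hy]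
    ring
  have t4 : ∫ a in (0:ℝ)..L₁, ∫ y in (-h)..(e (a, 0)), V2 (a, 0, y) = 0 := by
    rw [ww_congr hL₁.le (g := fun _ => 0)]
    · simp
    intro a ha
    rw [ww_congr (hlow a ha _ z2) (g := fun _ => 0)]
    · simp
    intro y hy
    simp only [V2, bc2 0 (by simp) a ha y hy]
    ring
  have t5 : ∫ a in (0:ℝ)..L₁, ∫ b in (0:ℝ)..L₂, V3 (a, b, -h)
      = 1 / 2 * h * ∫ a in (0:ℝ)..L₁, ∫ b in (0:ℝ)..L₂, G (a, b, -h) := by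
    simp only [← intervalIntegral.integral_const_mul]
    refine ww_congr hL₁.le fun a ha => ww_congr hL₂.le fun b hb => ?_
    simp only [V3, eG, bc3 a ha b hb]
    ring
  have t6 : ∫ a in (0:ℝ)..L₁, ∫ b in (0:ℝ)..L₂,
      ((f3 (a,b,e (a,b)) - (wwD (1,0) e (a,b) * f1 (a,b,e (a,b))
          + wwD (0,1) e (a,b) * f2 (a,b,e (a,b))))
        * (a * f1 (a,b,e (a,b)) + b * f2 (a,b,e (a,b)) + e (a,b) * f3 (a,b,e (a,b)))
        - 1 / 2 * G (a,b,e (a,b)) * (e (a,b) - (a * wwD (1,0) e (a,b) + b * wwD (0,1) e (a,b))))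
      = ∫ a in (0:ℝ)..L₁, ∫ b in (0:ℝ)..L₂,
          (V3 (a, b, e (a, b)) - (wwD (1,0) e (a,b) * V1 (a, b, e (a, b))
            + wwD (0,1) e (a,b) * V2 (a, b, e (a, b)))) := by
    refine ww_congr hL₁.le fun a ha => ww_congr hL₂.le fun b hb => ?_
    simp only [V1, V2, V3, R, eG]
    ring
  rw [t6]
  rw [t0, t1, t2, t3, t4, t5] at main
  linarith

theorem ww_surface (L₁ L₂ h g T : ℝ) (hL₁ : 0 < L₁) (hL₂ : 0 < L₂) (hh : 0 < h)
    (η : ℝ → ℝ → ℝ → ℝ) (ϕ : ℝ → ℝ → ℝ → ℝ → ℝ)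
    (hsol : IsWW3D L₁ L₂ h g T η ϕ) (t : ℝ) (ht : t ∈ Icc (0:ℝ) T) :
    ∫ a in (0:ℝ)..L₁, ∫ b in (0:ℝ)..L₂,
      (etaT3 η t a b * (a * psi3X1 η ϕ t a b + b * psi3X2 η ϕ t a b)
        - (a * etaX1 η t a b + b * etaX2 η t a b) * (psi3T η ϕ t a b + g * η t a b)
        + η t a b * (psi3T η ϕ t a b + g * η t a b))
    = 1 / 2 * (L₁ * (∫ b in (0:ℝ)..L₂, ∫ y in (-h)..(η t L₁ b), gradSq3 ϕ t L₁ b y)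
        + L₂ * (∫ a in (0:ℝ)..L₁, ∫ y in (-h)..(η t a L₂), gradSq3 ϕ t a L₂ y)
        + h * ∫ a in (0:ℝ)..L₁, ∫ b in (0:ℝ)..L₂, gradSq3 ϕ t a b (-h))
      - 1 / 2 * ∫ a in (0:ℝ)..L₁, ∫ b in (0:ℝ)..L₂, ∫ y in (-h)..(η t a b),
          gradSq3 ϕ t a b y := by
  let H : ℝ × ℝ × ℝ → ℝ := fun p => η p.1 p.2.1 p.2.2
  let Φ : ℝ × ℝ × ℝ × ℝ → ℝ := fun p => ϕ p.1 p.2.1 p.2.2.1 p.2.2.2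
  have sH : ContDiff ℝ (⊤ : ℕ∞) H := hsol.smooth_eta
  have sΦ : ContDiff ℝ (⊤ : ℕ∞) Φ := hsol.smooth_phi
  have dH := ww_smooth_diff sH
  have dΦ := ww_smooth_diff sΦ
  let e : ℝ × ℝ → ℝ := fun q => H (t, q)
  let f : ℝ × ℝ × ℝ → ℝ := fun q => Φ (t, q)
  have se : ContDiff ℝ (⊤ : ℕ∞) e := sH.comp (contDiff_const.prodMk contDiff_id)
  have sf : ContDiff ℝ (⊤ : ℕ∞) f := sΦ.comp (contDiff_const.prodMk contDiff_id)
  have de := ww_smooth_diff se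
  have df := ww_smooth_diff sf
  have x1 : ∀ a b y, phiX1 ϕ t a b y = wwD (1,0,0) f (a,b,y) := fun a b y =>
    (wwD_31 df a b y).deriv
  have x2 : ∀ a b y, phiX2 ϕ t a b y = wwD (0,1,0) f (a,b,y) := fun a b y =>
    (wwD_32 df a b y).deriv
  have x3 : ∀ a b y, phiY3 ϕ t a b y = wwD (0,0,1) f (a,b,y) := fun a b y =>
    (wwD_33 df a b y).deriv
  have e1 : ∀ a b, etaX1 η t a b = wwD (1,0) e (a,b) := fun a b => (wwD_21 de a b).deriv
  have e2 : ∀ a b, etaX2 η t a b = wwD (0,1) e (a,b) := fun a b => (wwD_22 de a b).deriv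
  have s1 := wwD_smooth sf (1,0,0)
  have s2 := wwD_smooth sf (0,1,0)
  have s3 := wwD_smooth sf (0,0,1)
  -- chain rules
  have q1 : ∀ a b, psi3X1 η ϕ t a b = phiX1 ϕ t a b (η t a b)
      + etaX1 η t a b * phiY3 ϕ t a b (η t a b) := by
    intro a b
    rw [x1, x3, e1]
    have := ww_chain df (c := fun s => (s, b, e (s, b)))
      ((hasDerivAt_id a).prodMk ((hasDerivAt_const a b).prodMk (wwD_21 de a b)))
    refine Eq.trans (HasDerivAt.deriv this) ?_
    rw [← wwD_smul]
    refine Eq.trans ?_ (wwD_add _ _ _ _)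
    simp [e, H]
  have q2 : ∀ a b, psi3X2 η ϕ t a b = phiX2 ϕ t a b (η t a b)
      + etaX2 η t a b * phiY3 ϕ t a b (η t a b) := by
    intro a b
    rw [x2, x3, e2]
    have := ww_chain df (c := fun s => (a, s, e (a, s)))
      ((hasDerivAt_const b a).prodMk ((hasDerivAt_id b).prodMk (wwD_22 de a b)))
    refine Eq.trans (HasDerivAt.deriv this) ?_
    rw [← wwD_smul]
    refine Eq.trans ?_ (wwD_add _ _ _ _)
    simp [e, H]
  have q0 : ∀ a b, psi3T η ϕ t a b = phiT3 ϕ t a b (η t a b)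
      + etaT3 η t a b * phiY3 ϕ t a b (η t a b) := by
    intro a b
    have y0 : etaT3 η t a b = wwD (1,0,0) H (t,a,b) := (wwD_31 dH t a b).deriv
    have y1 : ∀ y, phiT3 ϕ t a b y = wwD (1,0,0,0) Φ (t,a,b,y) := fun y =>
      (ww_chain dΦ (c := fun s => (s, a, b, y)) ((hasDerivAt_id t).prodMk
        ((hasDerivAt_const t a).prodMk ((hasDerivAt_const t b).prodMk
          (hasDerivAt_const t y))))).deriv
    have y2 : ∀ y, phiY3 ϕ t a b y = wwD (0,0,0,1) Φ (t,a,b,y) := fun y =>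
      (ww_chain dΦ (c := fun s => (t, a, b, s)) ((hasDerivAt_const y t).prodMk
        ((hasDerivAt_const y a).prodMk ((hasDerivAt_const y b).prodMk
          (hasDerivAt_id y))))).deriv
    rw [y0, y1, y2]
    have := ww_chain dΦ (c := fun s => (s, a, b, H (s, a, b)))
      ((hasDerivAt_id t).prodMk ((hasDerivAt_const t a).prodMk ((hasDerivAt_const t b).prodMk
        (wwD_31 dH t a b))))
    refine Eq.trans (HasDerivAt.deriv this) ?_
    rw [← wwD_smul]
    refine Eq.trans ?_ (wwD_add _ _ _ _)
    simp [H]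
  have key := ww_poho L₁ L₂ h hL₁ hL₂ e f se sf
    (fun a ha b hb => by have := hsol.eta_lower t ht a ha b hb; simp only [e, H]; linarith)
    (wwD (1,0,0) f) (wwD (0,1,0) f) (wwD (0,0,1) f)
    (fun p => gradSq3 ϕ t p.1 p.2.1 p.2.2) rfl rfl rfl
    (fun p => by simp only [gradSq3, x1, x2, x3])
    (fun a ha b hb y hy => by
      have := hsol.laplace t ht a ha b hb y hy
      simp only [x1, x2, x3] at this
      rwa [(wwD_31 (ww_smooth_diff s1) a b y).deriv, (wwD_32 (ww_smooth_diff s2) a b y).deriv,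
        (wwD_33 (ww_smooth_diff s3) a b y).deriv] at this)
    (fun a ha b hb y hy => by rw [← x1]; exact hsol.bc_x1 t ht a ha b hb y hy)
    (fun b hb a ha y hy => by rw [← x2]; exact hsol.bc_x2 t ht b hb a ha y hy)
    (fun a ha b hb => by rw [← x3]; exact hsol.bc_bottom t ht a ha b hb)
  refine Eq.trans ?_ key
  refine ww_congr hL₁.le fun a ha => ww_congr hL₂.le fun b hb => ?_
  have hk := hsol.kinematic t ht a ha b hb
  have hb' := hsol.bernoulli t ht a ha b hb
  have hT : phiT3 ϕ t a b (η t a b) = -(1 / 2 * ((phiX1 ϕ t a b (η t a b)) ^ 2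
          + (phiX2 ϕ t a b (η t a b)) ^ 2 + (phiY3 ϕ t a b (η t a b)) ^ 2)) - g * η t a b := by
    linarith
  rw [q0, q1, q2, hT, hk, ← x1, ← x2, ← x3, ← e1, ← e2]
  simp only [gradSq3, e, H]
  ring

/-- Lemma 4.5 (`d = 2`). -/
theorem lemma_after_ibp_3d
    (L₁ L₂ h g T : ℝ) (hL₁ : 0 < L₁) (hL₂ : 0 < L₂) (hh : 0 < h) (hg : 0 < g) (hT : 0 < T)
    (η : ℝ → ℝ → ℝ → ℝ) (ϕ : ℝ → ℝ → ℝ → ℝ → ℝ)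
    (hsol : IsWW3D L₁ L₂ h g T η ϕ) :
    bigB L₁ L₂ g T η ϕ
      = bigP L₁ L₂ h T η ϕ
        - 1 / 2 * (∫ t in (0:ℝ)..T, ∫ x₁ in (0:ℝ)..L₁, ∫ x₂ in (0:ℝ)..L₂,
            ∫ y in (-h)..(η t x₁ x₂), gradSq3 ϕ t x₁ x₂ y)
        - 3 * (∫ t in (0:ℝ)..T, ∫ x₁ in (0:ℝ)..L₁, ∫ x₂ in (0:ℝ)..L₂,
            η t x₁ x₂ * psi3T η ϕ t x₁ x₂)
        - 2 * g * (∫ t in (0:ℝ)..T, ∫ x₁ in (0:ℝ)..L₁, ∫ x₂ in (0:ℝ)..L₂,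
            (η t x₁ x₂) ^ 2)
        - ((∫ x₁ in (0:ℝ)..L₁, ∫ x₂ in (0:ℝ)..L₂,
              η T x₁ x₂ * (x₁ * psi3X1 η ϕ T x₁ x₂ + x₂ * psi3X2 η ϕ T x₁ x₂))
            - ∫ x₁ in (0:ℝ)..L₁, ∫ x₂ in (0:ℝ)..L₂,
                η 0 x₁ x₂ * (x₁ * psi3X1 η ϕ 0 x₁ x₂ + x₂ * psi3X2 η ϕ 0 x₁ x₂)) := by
  let H : ℝ × ℝ × ℝ → ℝ := fun p => η p.1 p.2.1 p.2.2
  let Φ : ℝ × ℝ × ℝ × ℝ → ℝ := fun p => ϕ p.1 p.2.1 p.2.2.1 p.2.2.2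
  have sH : ContDiff ℝ (⊤ : ℕ∞) H := hsol.smooth_eta
  have sΦ : ContDiff ℝ (⊤ : ℕ∞) Φ := hsol.smooth_phi
  let Ψ : ℝ × ℝ × ℝ → ℝ := fun p => Φ (p.1, p.2.1, p.2.2, H p)
  have sΨ : ContDiff ℝ (⊤ : ℕ∞) Ψ := by fun_prop
  have dH := ww_smooth_diff sH
  have dΦ := ww_smooth_diff sΦ
  have dΨ := ww_smooth_diff sΨ
  have s0 := wwD_smooth sΨ (1,0,0)
  have s1 := wwD_smooth sΨ (0,1,0)
  have s2 := wwD_smooth sΨ (0,0,1)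
  have cH := sH.continuous
  have c0 := s0.continuous
  have c1 := s1.continuous
  have c2 := s2.continuous
  have cH0 := (wwD_smooth sH (1,0,0)).continuous
  have cH1 := (wwD_smooth sH (0,1,0)).continuous
  have cH2 := (wwD_smooth sH (0,0,1)).continuous
  have c01 := (wwD_smooth s0 (0,1,0)).continuous
  have c02 := (wwD_smooth s0 (0,0,1)).continuous
  have p0 : ∀ t a b, psi3T η ϕ t a b = wwD (1,0,0) Ψ (t,a,b) := fun t a b =>
    (wwD_31 dΨ t a b).deriv
  have p1 : ∀ t a b, psi3X1 η ϕ t a b = wwD (0,1,0) Ψ (t,a,b) := fun t a b =>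
    (wwD_32 dΨ t a b).deriv
  have p2 : ∀ t a b, psi3X2 η ϕ t a b = wwD (0,0,1) Ψ (t,a,b) := fun t a b =>
    (wwD_33 dΨ t a b).deriv
  have h0 : ∀ t a b, etaT3 η t a b = wwD (1,0,0) H (t,a,b) := fun t a b =>
    (wwD_31 dH t a b).deriv
  have h1 : ∀ t a b, etaX1 η t a b = wwD (0,1,0) H (t,a,b) := fun t a b =>
    (wwD_32 dH t a b).deriv
  have h2 : ∀ t a b, etaX2 η t a b = wwD (0,0,1) H (t,a,b) := fun t a b =>
    (wwD_33 dH t a b).deriv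
  let Th : ℝ × ℝ × ℝ → ℝ := fun p => -(H p) * wwD (1,0,0) Ψ p - g / 2 * (H p) ^ 2
  let Th1 : ℝ × ℝ × ℝ → ℝ := fun p => -(wwD (0,1,0) H p) * wwD (1,0,0) Ψ p
    + -(H p) * wwD (0,1,0) (wwD (1,0,0) Ψ) p - g / 2 * (2 * H p * wwD (0,1,0) H p)
  let Th2 : ℝ × ℝ × ℝ → ℝ := fun p => -(wwD (0,0,1) H p) * wwD (1,0,0) Ψ p
    + -(H p) * wwD (0,0,1) (wwD (1,0,0) Ψ) p - g / 2 * (2 * H p * wwD (0,0,1) H p)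
  have cTh : Continuous Th := by fun_prop
  have cTh1 : Continuous Th1 := by fun_prop
  have cTh2 : Continuous Th2 := by fun_prop
  have dTh1 : ∀ t a b, HasDerivAt (fun s => Th (t, s, b)) (Th1 (t, a, b)) a := by
    intro t a b
    have g1 := wwD_32 dH t a b
    have g2 := wwD_32 (ww_smooth_diff s0) t a b
    have := (g1.neg.mul g2).sub ((g1.pow 2).const_mul (g / 2))
    refine this.congr_deriv ?_
    simp [Th1]
  have dTh2 : ∀ t a b, HasDerivAt (fun s => Th (t, a, s)) (Th2 (t, a, b)) b := by
    intro t a b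
    have g1 := wwD_33 dH t a b
    have g2 := wwD_33 (ww_smooth_diff s0) t a b
    have := (g1.neg.mul g2).sub ((g1.pow 2).const_mul (g / 2))
    refine this.congr_deriv ?_
    simp [Th2]
  let X1' : ℝ × ℝ × ℝ → ℝ := fun p => Th p + p.2.1 * Th1 p
  let X2' : ℝ × ℝ × ℝ → ℝ := fun p => Th p + p.2.2 * Th2 p
  have cX1 : Continuous X1' := by fun_prop
  have cX2 : Continuous X2' := by fun_prop
  have B1 := ww_box2 (fun p => p.2.1 * Th p) X1' cX1
    (fun t a b => ((hasDerivAt_id a).mul (dTh1 t a b)).congr_deriv (by simp [X1'])) 0 T 0 L₁ 0 L₂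
  have B2 := ww_box3 (fun p => p.2.2 * Th p) X2' cX2
    (fun t a b => ((hasDerivAt_id b).mul (dTh2 t a b)).congr_deriv (by simp [X2'])) 0 T 0 L₁ 0 L₂
  let M : ℝ × ℝ × ℝ → ℝ := fun p =>
    H p * (p.2.1 * wwD (0,1,0) Ψ p + p.2.2 * wwD (0,0,1) Ψ p)
  let M' : ℝ × ℝ × ℝ → ℝ := fun p =>
    wwD (1,0,0) H p * (p.2.1 * wwD (0,1,0) Ψ p + p.2.2 * wwD (0,0,1) Ψ p)
    + H p * (p.2.1 * wwD (0,1,0) (wwD (1,0,0) Ψ) p + p.2.2 * wwD (0,0,1) (wwD (1,0,0) Ψ) p)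
  have cM : Continuous M := by fun_prop
  have cM' : Continuous M' := by fun_prop
  have B3 := ww_box1 M M' cM' (fun t a b => by
    have := (wwD_31 dH t a b).mul (((wwD_31 (ww_smooth_diff s1) t a b).const_mul a).add
      ((wwD_31 (ww_smooth_diff s2) t a b).const_mul b))
    refine this.congr_deriv ?_
    rw [wwD_comm sΨ (1,0,0) (0,1,0), wwD_comm sΨ (1,0,0) (0,0,1)]
    simp [M']) 0 T 0 L₁ 0 L₂
  let K : ℝ × ℝ × ℝ → ℝ := fun p =>
    wwD (1,0,0) H p * (p.2.1 * wwD (0,1,0) Ψ p + p.2.2 * wwD (0,0,1) Ψ p)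
    - (p.2.1 * wwD (0,1,0) H p + p.2.2 * wwD (0,0,1) H p) * (wwD (1,0,0) Ψ p + g * H p)
    + H p * (wwD (1,0,0) Ψ p + g * H p)
  have cK : Continuous K := by fun_prop
  let N1 : ℝ × ℝ × ℝ → ℝ := fun p => H p * wwD (1,0,0) Ψ p
  let N2 : ℝ × ℝ × ℝ → ℝ := fun p => H p ^ 2
  have cN1 : Continuous N1 := by fun_prop
  have cN2 : Continuous N2 := by fun_prop
  have pw : ∀ p, X1' p + X2' p + M' p = -3 * N1 p + (-(2 * g)) * N2 p + K p := by
    intro p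
    simp only [X1', X2', M', N1, N2, K, Th, Th1, Th2]
    ring
  have I1 : (∫ t in (0:ℝ)..T, ∫ a in (0:ℝ)..L₁, ∫ b in (0:ℝ)..L₂, X1' (t,a,b))
      + (∫ t in (0:ℝ)..T, ∫ a in (0:ℝ)..L₁, ∫ b in (0:ℝ)..L₂, X2' (t,a,b))
      + (∫ t in (0:ℝ)..T, ∫ a in (0:ℝ)..L₁, ∫ b in (0:ℝ)..L₂, M' (t,a,b))
      = -3 * (∫ t in (0:ℝ)..T, ∫ a in (0:ℝ)..L₁, ∫ b in (0:ℝ)..L₂, N1 (t,a,b))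
      + (-(2 * g)) * (∫ t in (0:ℝ)..T, ∫ a in (0:ℝ)..L₁, ∫ b in (0:ℝ)..L₂, N2 (t,a,b))
      + ∫ t in (0:ℝ)..T, ∫ a in (0:ℝ)..L₁, ∫ b in (0:ℝ)..L₂, K (t,a,b) := by
    rw [← ww_add3 X1' X2' cX1 cX2, ← ww_add3 (fun p => X1' p + X2' p) M' (by fun_prop) cM']
    simp only [pw]
    rw [ww_add3 (fun p => -3 * N1 p + (-(2 * g)) * N2 p) K (by fun_prop) cK,
      ww_add3 (fun p => -3 * N1 p) (fun p => (-(2 * g)) * N2 p) (by fun_prop) (by fun_prop)]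
    simp only [intervalIntegral.integral_const_mul]
  -- the surface term
  have cG : Continuous (fun p : ℝ × ℝ × ℝ × ℝ => gradSq3 ϕ p.1 p.2.1 p.2.2.1 p.2.2.2) := by
    have y1 : ∀ t a b y, phiX1 ϕ t a b y = wwD (0,1,0,0) Φ (t,a,b,y) := fun t a b y =>
      (ww_chain dΦ (c := fun s => (t, s, b, y)) ((hasDerivAt_const a t).prodMk
        ((hasDerivAt_id a).prodMk ((hasDerivAt_const a b).prodMk (hasDerivAt_const a y))))).deriv
    have y2 : ∀ t a b y, phiX2 ϕ t a b y = wwD (0,0,1,0) Φ (t,a,b,y) := fun t a b y =>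
      (ww_chain dΦ (c := fun s => (t, a, s, y)) ((hasDerivAt_const b t).prodMk
        ((hasDerivAt_const b a).prodMk ((hasDerivAt_id b).prodMk (hasDerivAt_const b y))))).deriv
    have y3 : ∀ t a b y, phiY3 ϕ t a b y = wwD (0,0,0,1) Φ (t,a,b,y) := fun t a b y =>
      (ww_chain dΦ (c := fun s => (t, a, b, s)) ((hasDerivAt_const y t).prodMk
        ((hasDerivAt_const y a).prodMk ((hasDerivAt_const y b).prodMk (hasDerivAt_id y))))).deriv
    have k1 := (wwD_smooth sΦ (0,1,0,0)).continuous
    have k2 := (wwD_smooth sΦ (0,0,1,0)).continuous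
    have k3 := (wwD_smooth sΦ (0,0,0,1)).continuous
    simp only [gradSq3, y1, y2, y3]
    fun_prop
  let G : ℝ × ℝ × ℝ × ℝ → ℝ := fun p => gradSq3 ϕ p.1 p.2.1 p.2.2.1 p.2.2.2
  have cG' : Continuous G := cG
  let Z : ℝ × ℝ × ℝ → ℝ := fun p => ∫ y in (-h)..(H p), G (p.1, p.2.1, p.2.2, y)
  have cZ : Continuous Z :=
    intervalIntegral.continuous_parametric_intervalIntegral_of_continuous
      (f := fun (p : ℝ × ℝ × ℝ) y => G (p.1, p.2.1, p.2.2, y))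
      (by simp only [Function.uncurry_def]; fun_prop) cH
  have I2 : ∫ t in (0:ℝ)..T, ∫ a in (0:ℝ)..L₁, ∫ b in (0:ℝ)..L₂, K (t,a,b)
      = bigP L₁ L₂ h T η ϕ - 1 / 2 * (∫ t in (0:ℝ)..T, ∫ x₁ in (0:ℝ)..L₁, ∫ x₂ in (0:ℝ)..L₂,
            ∫ y in (-h)..(η t x₁ x₂), gradSq3 ϕ t x₁ x₂ y) := by
    have step : ∫ t in (0:ℝ)..T, ∫ a in (0:ℝ)..L₁, ∫ b in (0:ℝ)..L₂, K (t,a,b)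
      = ∫ t in (0:ℝ)..T, (1 / 2 * (L₁ * (∫ b in (0:ℝ)..L₂, Z (t, L₁, b))
        + L₂ * (∫ a in (0:ℝ)..L₁, Z (t, a, L₂))
        + h * ∫ a in (0:ℝ)..L₁, ∫ b in (0:ℝ)..L₂, G (t, a, b, -h))
      - 1 / 2 * ∫ a in (0:ℝ)..L₁, ∫ b in (0:ℝ)..L₂, Z (t, a, b)) := by
      refine ww_congr hT.le fun t ht => ?_
      refine Eq.trans ?_ (ww_surface L₁ L₂ h g T hL₁ hL₂ hh η ϕ hsol t ht)
      simp only [p0, p1, p2, h0, h1, h2]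
      rfl
    rw [step, intervalIntegral.integral_sub (Continuous.intervalIntegrable (by fun_prop) _ _)
      (Continuous.intervalIntegrable (by fun_prop) _ _)]
    rw [intervalIntegral.integral_const_mul, intervalIntegral.integral_const_mul]
    rfl
  have I3 : bigB L₁ L₂ g T η ϕ
      = (∫ t in (0:ℝ)..T, ∫ a in (0:ℝ)..L₁, ∫ b in (0:ℝ)..L₂, X1' (t,a,b))
      + (∫ t in (0:ℝ)..T, ∫ a in (0:ℝ)..L₁, ∫ b in (0:ℝ)..L₂, X2' (t,a,b)) := by
    rw [B1, B2]
    simp only [zero_mul, sub_zero, intervalIntegral.integral_const_mul]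
    rw [← intervalIntegral.integral_const_mul, ← intervalIntegral.integral_const_mul,
      ← intervalIntegral.integral_add (Continuous.intervalIntegrable (by fun_prop) _ _)
      (Continuous.intervalIntegrable (by fun_prop) _ _)]
    simp only [bigB, Theta3, p0]
    rfl
  have I4 : (∫ t in (0:ℝ)..T, ∫ a in (0:ℝ)..L₁, ∫ b in (0:ℝ)..L₂, M' (t,a,b))
      = (∫ a in (0:ℝ)..L₁, ∫ b in (0:ℝ)..L₂, M (T,a,b))
        - ∫ a in (0:ℝ)..L₁, ∫ b in (0:ℝ)..L₂, M (0,a,b) := by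
    have := ww_add2 (fun q => M (T,q) - M (0,q)) (fun q => M (0,q)) (by fun_prop) (by fun_prop)
      0 L₁ 0 L₂
    simp only [sub_add_cancel] at this
    rw [B3]
    linarith
  simp only [p0, p1, p2]
  rw [I2, I4, ← I3] at I1
  simp only [N1, N2, M, H] at I1
  linarith
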